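/- arXiv:2103.13521 — 2 statements merged into one kernel-verified Lean document; each statement's English description precedes it below -/
import Mathlib

section
/- Let P be a probability distribution over variables (X_v)_{v∈V} that is Markovian to a maximal directed ancestral graph G_0 and satisfies: (i) P is converse pairwise Markovian to G_0, and (ii) P satisfies ordered upward- and downward-stability w.r.t. G_0. Then sk(G_0) = sk(G(P)) for every output G(P) of a natural constraint-based structure-learning algorithm. -/
open MeasureTheory ProbabilityTheory

/-! ## Mixed graphs, m-separation, and related graphical notions -/

/-- A mixed graph with arrows (`i → j`) and bidirected arcs (`i ↔ j`). -/
structure MixedGraph (V : Type) where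
  arrow : V → V → Prop
  arc : V → V → Prop

namespace MixedGraph

variable {V : Type} (G : MixedGraph V)

/-- `G.anc i j` : `i` is an ancestor of `j`, i.e. there is a directed path from `i` to `j`. -/
def anc (i j : V) : Prop := Relation.TransGen G.arrow i j

/-- Adjacency: there is some edge between `i` and `j`. -/
def adj (i j : V) : Prop := G.arrow i j ∨ G.arrow j i ∨ G.arc i j

/-- A directed ancestral graph: a simple mixed graph with arrows and arcs, no directed
cycle, and no arc one of whose endpoints is an ancestor of the other. -/
def IsDirectedAncestral : Prop :=
  (∀ i j, G.arc i j ↔ G.arc j i) ∧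
  (∀ i, ¬ G.arc i i) ∧
  (∀ i j, ¬ (G.arrow i j ∧ G.arrow j i)) ∧
  (∀ i j, ¬ (G.arrow i j ∧ G.arc i j)) ∧
  (∀ i, ¬ G.anc i i) ∧
  (∀ i j, G.arc i j → ¬ G.anc i j ∧ ¬ G.anc j i)

/-- A DAG: only arrows, and no directed cycle. -/
def IsDAG : Prop := (∀ i j, ¬ G.arc i j) ∧ (∀ i, ¬ G.anc i i)

/-- There is an edge between `i` and `j` with an arrowhead at `j`. -/
def headInto (i j : V) : Prop := G.arrow i j ∨ G.arc i j

/-- The inner node `b` of a tripath `⟨a,b,c⟩` is a collider. -/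
def collider (a b c : V) : Prop := G.headInto a b ∧ G.headInto c b

/-- The list of nodes `p` is a path which is connecting given `C` : consecutive nodes are
adjacent, no node is repeated, every collider inner node is in `C` or an ancestor of a node
in `C`, and every non-collider inner node is not in `C`. -/
def Connecting (C : Set V) (p : List V) : Prop :=
  p.Nodup ∧ p.Chain' G.adj ∧
  ∀ t, 0 < t → ∀ (h1 : t - 1 < p.length) (h2 : t < p.length) (h3 : t + 1 < p.length),
    (G.collider (p.get ⟨t-1, h1⟩) (p.get ⟨t, h2⟩) (p.get ⟨t+1, h3⟩) →
      p.get ⟨t, h2⟩ ∈ C ∨ ∃ c ∈ C, G.anc (p.get ⟨t, h2⟩) c) ∧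
    (¬ G.collider (p.get ⟨t-1, h1⟩) (p.get ⟨t, h2⟩) (p.get ⟨t+1, h3⟩) →
      p.get ⟨t, h2⟩ ∉ C)

/-- m-separation : `A ⊥ B | C` in `G` iff there is no connecting path between `A` and `B`
given `C`. -/
def mSep (A B C : Set V) : Prop :=
  ¬ ∃ p : List V, G.Connecting C p ∧
      (∃ a ∈ A, p.head? = some a) ∧ (∃ b ∈ B, p.getLast? = some b)

/-- Two graphs are Markov equivalent if they induce the same independence model by
m-separation. -/
def MarkovEquiv (H : MixedGraph V) : Prop :=
  ∀ A B C : Set V, Disjoint A B → Disjoint A C → Disjoint B C →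
    (G.mSep A B C ↔ H.mSep A B C)

/-- `G` is maximal: every pair of non-adjacent nodes is separated given some set. -/
def Maximal : Prop :=
  ∀ i j : V, i ≠ j → ¬ G.adj i j → ∃ C : Set V, i ∉ C ∧ j ∉ C ∧ G.mSep {i} {j} C

/-- `an(i,j) = (an(i) ∪ an(j)) \ {i,j}`. -/
def anSet (i j : V) : Set V :=
  {k | (G.anc k i ∨ G.anc k j) ∧ k ≠ i ∧ k ≠ j}

/-- The strict form of the minimal order of `G` : `a < b` iff `b` is an ancestor of `a`. -/
def minLt (a b : V) : Prop := G.anc b a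

end MixedGraph

/-! ## Abstract (singleton) independence relations and stability conditions -/

section IndependenceRelations

variable {V : Type}

/-- Ordered upward-stability of a singleton independence relation `ci` w.r.t. the strict
partial order `lt`. -/
def UpStab (lt : V → V → Prop) (ci : V → V → Set V → Prop) : Prop :=
  ∀ i j (C : Set V), i ≠ j → i ∉ C → j ∉ C → ci i j C →
    ∀ k, k ≠ i → k ≠ j → (lt i k ∨ lt j k) → ci i j (C ∪ {k})

/-- Ordered downward-stability of a singleton independence relation `ci` w.r.t. the strict
partial order `lt`. -/
def DownStab (lt : V → V → Prop) (ci : V → V → Set V → Prop) : Prop :=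
  ∀ i j (C : Set V), i ≠ j → i ∉ C → j ∉ C → ci i j C →
    ∀ k, ¬ lt i k → ¬ lt j k → (∀ l ∈ C \ {k}, ¬ lt l k) → ci i j (C \ {k})

/-- The skeleton of an independence relation: `i` and `j` are adjacent iff there is no `C`
with `⟨i,j|C⟩` an independence. -/
def skP (ci : V → V → Set V → Prop) (i j : V) : Prop :=
  i ≠ j ∧ ¬ ∃ C : Set V, i ∉ C ∧ j ∉ C ∧ ci i j C

/-- An output of a natural constraint-based structure-learning algorithm: a graph `H` whose
skeleton is the skeleton of the independence relation `ci`, obtained by directing the edges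
of that skeleton according to a `P`-compatible partial order (given here by its strict form
`lt`, required to coincide with the minimal order of `H`), w.r.t. which ordered upward- and
downward-stability hold. -/
def NaturalOutput (ci : V → V → Set V → Prop) (H : MixedGraph V) : Prop :=
  (∀ i j, H.adj i j ↔ skP ci i j) ∧
  ∃ lt : V → V → Prop, Irreflexive lt ∧ Transitive lt ∧
    (∀ i j, H.arrow i j ↔ (skP ci i j ∧ lt j i)) ∧
    (∀ i j, H.arc i j ↔ (skP ci i j ∧ ¬ lt i j ∧ ¬ lt j i)) ∧
    (∀ a b, lt a b ↔ H.minLt a b) ∧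
    UpStab lt ci ∧ DownStab lt ci

/-- Singleton-transitivity. -/
def SingletonTransitive (ci : V → V → Set V → Prop) : Prop :=
  ∀ i j k (C : Set V), i ≠ j → i ≠ k → j ≠ k → i ∉ C → j ∉ C → k ∉ C →
    ci i j C → ci i j (C ∪ {k}) → ci i k C ∨ ci j k C

/-- `ci` is V-unstable : there is a V-configuration `⟨i,k,j⟩` in the skeleton of `ci` and a
set `C` disjoint from `{i,j,k}` with `⟨i,j|C⟩` and `⟨i,j|C∪{k}⟩` independencies. -/
def VUnstable (ci : V → V → Set V → Prop) : Prop :=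
  ∃ i k j : V, ∃ C : Set V, i ≠ j ∧ i ≠ k ∧ j ≠ k ∧
    skP ci i k ∧ skP ci k j ∧ ¬ skP ci i j ∧
    i ∉ C ∧ j ∉ C ∧ k ∉ C ∧ ci i j C ∧ ci i j (C ∪ {k})

def VStable (ci : V → V → Set V → Prop) : Prop := ¬ VUnstable ci

/-- `ci` is path-unstable : there is a path `⟨i, i₁, …, i_r, k, j⟩` in the skeleton of `ci`
with `i,j` non-adjacent and every `i_n` adjacent to `j`, and a set `C` disjoint from
`{i,j,k}`, such that `⟨i,j | U∪C⟩` and `⟨i,j | U∪C∪{k}⟩` are independencies, where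
`U = {i₁,…,i_r}`. -/
def PathUnstable (ci : V → V → Set V → Prop) : Prop :=
  ∃ (i k j : V) (is : List V) (C : Set V),
    (i :: (is ++ [k, j])).Nodup ∧
    (i :: (is ++ [k, j])).Chain' (skP ci) ∧
    ¬ skP ci i j ∧
    (∀ m ∈ is, skP ci m j) ∧
    i ∉ C ∧ j ∉ C ∧ k ∉ C ∧
    ci i j ({m | m ∈ is} ∪ C) ∧ ci i j (({m | m ∈ is} ∪ C) ∪ {k})

def PathStable (ci : V → V → Set V → Prop) : Prop := ¬ PathUnstable ci

/-- The uniqueness property: all maximal directed ancestral graphs with the skeleton of `ci`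
w.r.t. (the minimal order of) which `ci` satisfies ordered upward- and downward-stability
are Markov equivalent. -/
def UniquenessProp (ci : V → V → Set V → Prop) : Prop :=
  ∀ H1 H2 : MixedGraph V,
    H1.IsDirectedAncestral → H1.Maximal → (∀ i j, H1.adj i j ↔ skP ci i j) →
      UpStab H1.minLt ci → DownStab H1.minLt ci →
    H2.IsDirectedAncestral → H2.Maximal → (∀ i j, H2.adj i j ↔ skP ci i j) →
      UpStab H2.minLt ci → DownStab H2.minLt ci →
    H1.MarkovEquiv H2

/-- The DAG-uniqueness property: all DAGs with the skeleton of `ci` w.r.t. which `ci`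
satisfies ordered upward- and downward-stability are Markov equivalent. -/
def DAGUniquenessProp (ci : V → V → Set V → Prop) : Prop :=
  ∀ H1 H2 : MixedGraph V,
    H1.IsDAG → (∀ i j, H1.adj i j ↔ skP ci i j) →
      UpStab H1.minLt ci → DownStab H1.minLt ci →
    H2.IsDAG → (∀ i j, H2.adj i j ↔ skP ci i j) →
      UpStab H2.minLt ci → DownStab H2.minLt ci →
    H1.MarkovEquiv H2

end IndependenceRelations

/-! ## Probabilistic conditional independence of collections of variables -/

section Probabilistic

variable {V : Type} {Ω : Type} [MeasurableSpace Ω]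
  {𝓧 : V → Type}

/-- The tuple of variables `X_A`. -/
def restrictVars (X : ∀ v, Ω → 𝓧 v) (A : Set V) : Ω → ∀ a : A, 𝓧 a :=
  fun ω a => X a ω

variable [StandardBorelSpace Ω] [Nonempty Ω] [∀ v, MeasurableSpace (𝓧 v)]

theorem measurable_restrictVars {X : ∀ v, Ω → 𝓧 v} (hX : ∀ v, Measurable (X v))
    (A : Set V) : Measurable (restrictVars X A) :=
  measurable_pi_lambda _ fun a => hX a

/-- `⟨A,B|C⟩ ∈ J(P)` : the tuple `X_A` is conditionally independent of `X_B` given `X_C`. -/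
def CI (μ : Measure Ω) [IsFiniteMeasure μ] (X : ∀ v, Ω → 𝓧 v)
    (hX : ∀ v, Measurable (X v)) (A B C : Set V) : Prop :=
  CondIndepFun (MeasurableSpace.comap (restrictVars X C) MeasurableSpace.pi)
    (Measurable.comap_le (measurable_restrictVars hX C))
    (restrictVars X A) (restrictVars X B) μ

/-- Singleton conditional independence `i ⫫ j | C`. -/
def ciP (μ : Measure Ω) [IsFiniteMeasure μ] (X : ∀ v, Ω → 𝓧 v)
    (hX : ∀ v, Measurable (X v)) (i j : V) (C : Set V) : Prop :=
  CI μ X hX {i} {j} C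

/-- `P` is Markovian to `G` : `J(G) ⊆ J(P)`. -/
def Markovian (μ : Measure Ω) [IsFiniteMeasure μ] (X : ∀ v, Ω → 𝓧 v)
    (hX : ∀ v, Measurable (X v)) (G : MixedGraph V) : Prop :=
  ∀ A B C : Set V, Disjoint A B → Disjoint A C → Disjoint B C →
    G.mSep A B C → CI μ X hX A B C

/-- `P` and `G` are faithful : `J(G) = J(P)`. -/
def Faithful (μ : Measure Ω) [IsFiniteMeasure μ] (X : ∀ v, Ω → 𝓧 v)
    (hX : ∀ v, Measurable (X v)) (G : MixedGraph V) : Prop :=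
  ∀ A B C : Set V, Disjoint A B → Disjoint A C → Disjoint B C →
    (G.mSep A B C ↔ CI μ X hX A B C)

/-- `P` is converse pairwise Markovian to `G`. -/
def ConvPairwiseMarkov (μ : Measure Ω) [IsFiniteMeasure μ] (X : ∀ v, Ω → 𝓧 v)
    (hX : ∀ v, Measurable (X v)) (G : MixedGraph V) : Prop :=
  ∀ i j : V, i ≠ j → ciP μ X hX i j (G.anSet i j) → ¬ G.adj i j

end Probabilistic

/-
An independence `i ⫫ j | C` can be moved to the canonical conditioning set `an(i,j)`: ordered
upward-stability adds the missing ancestors one at a time, and ordered downward-stability then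
removes the superfluous nodes, always one with no descendant left among the conditioning nodes.
So if `i` and `j` are adjacent in `G₀`, an independence between them given any set would
contradict the converse pairwise Markov property; conversely, non-adjacent nodes are separated by
maximality, hence independent by the Markov property.
-/

namespace UpStab

theorem ci_union {V : Type} {lt : V → V → Prop} {ci : V → V → Set V → Prop}
    (hup : UpStab lt ci) {i j : V} {C S : Set V} (hij : i ≠ j) (hiC : i ∉ C) (hjC : j ∉ C)
    (hS : S.Finite) (hiS : i ∉ S) (hjS : j ∉ S) (hlt : ∀ k ∈ S, lt i k ∨ lt j k)
    (h : ci i j C) : ci i j (C ∪ S) := by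
  induction S, hS using Set.Finite.induction_on with
  | empty => rwa [Set.union_empty]
  | @insert k S _ _ ih =>
    obtain ⟨hik, hiS⟩ := not_or.mp hiS
    obtain ⟨hjk, hjS⟩ := not_or.mp hjS
    obtain ⟨hltk, hltS⟩ := Set.forall_mem_insert.mp hlt
    rw [← Set.union_singleton, ← Set.union_assoc]
    exact hup i j (C ∪ S) hij (not_or.mpr ⟨hiC, hiS⟩) (not_or.mpr ⟨hjC, hjS⟩)
      (ih hiS hjS hltS) k (Ne.symm hik) (Ne.symm hjk) hltk

end UpStab

namespace DownStab

theorem ci_of_ci_union {V : Type} {lt : V → V → Prop} [IsStrictOrder V lt]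
    {ci : V → V → Set V → Prop} (hdown : DownStab lt ci) {i j : V} {A T : Set V} (hij : i ≠ j)
    (hT : T.Finite) (hAT : Disjoint A T) (hi : i ∉ A ∪ T) (hj : j ∉ A ∪ T)
    (hltT : ∀ k ∈ T, ¬ lt i k ∧ ¬ lt j k) (hltAT : ∀ l ∈ A, ∀ k ∈ T, ¬ lt l k)
    (h : ci i j (A ∪ T)) : ci i j A := by
  induction hn : T.ncard generalizing T with
  | zero =>
    rwa [(Set.ncard_eq_zero hT).mp hn, Set.union_empty] at h
  | succ n ih =>
    have hne : T.Nonempty := Set.nonempty_of_ncard_ne_zero (hn.trans_ne n.succ_ne_zero)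
    let _ : PartialOrder V := partialOrderOfSO lt
    obtain ⟨k, hkT, hk_min⟩ := hT.exists_minimal hne
    have hk_lt : ∀ l ∈ (A ∪ T) \ {k}, ¬ lt l k := by
      rintro l ⟨hlA | hlT, -⟩ hlt
      · exact hltAT l hlA k hkT hlt
      · exact not_lt_of_ge (hk_min hlT (.inr hlt)) hlt
    have hkA : k ∉ A := hAT.notMem_of_mem_right hkT
    have h_diff : (A ∪ T) \ {k} = A ∪ T \ {k} := by
      rw [Set.union_sdiff_distrib, Set.sdiff_singleton_eq_self hkA]
    have h_sub : A ∪ T \ {k} ⊆ A ∪ T := Set.union_subset_union_right A Set.sdiff_subset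
    refine ih hT.sdiff (hAT.mono_right Set.sdiff_subset) (fun hi' => hi (h_sub hi'))
      (fun hj' => hj (h_sub hj')) (fun l hl => hltT l hl.1) (fun l hl m hm => hltAT l hl m hm.1)
      ?_ ?_
    · rw [← h_diff]
      exact hdown i j (A ∪ T) hij hi hj h k (hltT k hkT).1 (hltT k hkT).2 hk_lt
    · rw [Set.ncard_sdiff_singleton_of_mem hkT, hn, Nat.add_sub_cancel]

end DownStab

namespace MixedGraph

variable {V : Type} {G : MixedGraph V} {ci : V → V → Set V → Prop} {i j k l : V}

theorem isStrictOrder_minLt (hacyc : ∀ v, ¬ G.anc v v) : IsStrictOrder V G.minLt where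
  irrefl := hacyc
  trans _ _ _ hba hcb := Relation.TransGen.trans hcb hba

theorem ne_of_adj (hacyc : ∀ v, ¬ G.anc v v) (harc : ∀ v, ¬ G.arc v v) (h : G.adj i j) :
    i ≠ j := by
  rintro rfl
  rcases h with h | h | h
  · exact hacyc i (.single h)
  · exact hacyc i (.single h)
  · exact harc i h

theorem mem_anSet_of_anc (hl : l ∈ G.anSet i j) (hkl : G.anc k l) (hki : k ≠ i) (hkj : k ≠ j) :
    k ∈ G.anSet i j :=
  ⟨hl.1.imp (Relation.TransGen.trans hkl) (Relation.TransGen.trans hkl), hki, hkj⟩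

theorem ci_anSet_of_ci (hacyc : ∀ v, ¬ G.anc v v) (hup : UpStab G.minLt ci)
    (hdown : DownStab G.minLt ci) {C : Set V} (hAC : (G.anSet i j \ C).Finite)
    (hCA : (C \ G.anSet i j).Finite) (hij : i ≠ j) (hi : i ∉ C) (hj : j ∉ C) (h : ci i j C) :
    ci i j (G.anSet i j) := by
  have := isStrictOrder_minLt hacyc
  have hiA : i ∉ G.anSet i j := fun hA => hA.2.1 rfl
  have hjA : j ∉ G.anSet i j := fun hA => hA.2.2 rfl
  have hne {k : V} (hk : k ∈ C \ G.anSet i j) : k ≠ i ∧ k ≠ j :=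
    ⟨ne_of_mem_of_not_mem hk.1 hi, ne_of_mem_of_not_mem hk.1 hj⟩
  have h_union : ci i j (G.anSet i j ∪ C \ G.anSet i j) := by
    rw [Set.union_sdiff_self, Set.union_comm, ← Set.union_sdiff_self]
    exact hup.ci_union hij hi hj hAC (fun hA => hiA hA.1) (fun hA => hjA hA.1)
      (fun k hk => hk.1.1) h
  refine hdown.ci_of_ci_union hij hCA Set.disjoint_sdiff_right ?_ ?_ ?_ ?_ h_union
  · exact not_or.mpr ⟨hiA, fun hC => hi hC.1⟩
  · exact not_or.mpr ⟨hjA, fun hC => hj hC.1⟩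
  · exact fun k hk => ⟨fun hki => hk.2 ⟨.inl hki, hne hk⟩, fun hkj => hk.2 ⟨.inr hkj, hne hk⟩⟩
  · exact fun l hl k hk hkl => hk.2 (mem_anSet_of_anc hl hkl (hne hk).1 (hne hk).2)

theorem skP_of_adj [Finite V] (hacyc : ∀ v, ¬ G.anc v v) (harc : ∀ v, ¬ G.arc v v)
    (hconv : ∀ i j, i ≠ j → ci i j (G.anSet i j) → ¬ G.adj i j)
    (hup : UpStab G.minLt ci) (hdown : DownStab G.minLt ci) (hadj : G.adj i j) : skP ci i j := by
  have hij : i ≠ j := ne_of_adj hacyc harc hadj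
  refine ⟨hij, fun ⟨C, hi, hj, h⟩ => hconv i j hij ?_ hadj⟩
  exact ci_anSet_of_ci hacyc hup hdown (Set.toFinite _) (Set.toFinite _) hij hi hj h

theorem Maximal.adj_of_skP (hmax : G.Maximal)
    (hMark : ∀ i j C, i ≠ j → i ∉ C → j ∉ C → G.mSep {i} {j} C → ci i j C)
    (h : skP ci i j) : G.adj i j := by
  by_contra hadj
  obtain ⟨C, hi, hj, hsep⟩ := hmax i j h.1 hadj
  exact h.2 ⟨C, hi, hj, hMark i j C h.1 hi hj hsep⟩

end MixedGraph

theorem Markovian.ciP_of_mSep {V Ω : Type} [MeasurableSpace Ω] [StandardBorelSpace Ω] [Nonempty Ω]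
    {μ : Measure Ω} [IsFiniteMeasure μ] {𝓧 : V → Type} [∀ v, MeasurableSpace (𝓧 v)]
    {X : ∀ v, Ω → 𝓧 v} {hX : ∀ v, Measurable (X v)} {G : MixedGraph V}
    (hMark : Markovian μ X hX G) {i j : V} {C : Set V} (hij : i ≠ j) (hi : i ∉ C) (hj : j ∉ C)
    (hsep : G.mSep {i} {j} C) : ciP μ X hX i j C :=
  hMark {i} {j} C (Set.disjoint_singleton.mpr hij) (Set.disjoint_singleton_left.mpr hi)
    (Set.disjoint_singleton_left.mpr hj) hsep

theorem statement_4_general {V : Type} [Finite V] {ci : V → V → Set V → Prop}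
    {G : MixedGraph V} (hacyc : ∀ v, ¬ G.anc v v) (harc : ∀ v, ¬ G.arc v v) (hmax : G.Maximal)
    (hMark : ∀ i j C, i ≠ j → i ∉ C → j ∉ C → G.mSep {i} {j} C → ci i j C)
    (hconv : ∀ i j, i ≠ j → ci i j (G.anSet i j) → ¬ G.adj i j)
    (hup : UpStab G.minLt ci) (hdown : DownStab G.minLt ci) (i j : V) :
    G.adj i j ↔ skP ci i j :=
  ⟨MixedGraph.skP_of_adj hacyc harc hconv hup hdown, hmax.adj_of_skP hMark⟩

/-- Theorem 9 of Sadeghi–Soo. -/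
theorem statement_4 {V : Type} [Fintype V]
    {Ω : Type} [MeasurableSpace Ω] [StandardBorelSpace Ω] [Nonempty Ω]
    (μ : Measure Ω) [IsProbabilityMeasure μ]
    {𝓧 : V → Type} [∀ v, MeasurableSpace (𝓧 v)]
    (X : ∀ v, Ω → 𝓧 v) (hX : ∀ v, Measurable (X v))
    (G0 : MixedGraph V) (hanc : G0.IsDirectedAncestral) (hmax : G0.Maximal)
    (hMark : Markovian μ X hX G0)
    (hconv : ConvPairwiseMarkov μ X hX G0)
    (hup : UpStab G0.minLt (ciP μ X hX)) (hdown : DownStab G0.minLt (ciP μ X hX)) :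
    ∀ H : MixedGraph V, NaturalOutput (ciP μ X hX) H →
      ∀ i j, G0.adj i j ↔ H.adj i j := by
  intro H hH i j
  obtain ⟨-, harc, -, -, hacyc, -⟩ := hanc
  exact (statement_4_general hacyc harc hmax (fun _ _ _ => hMark.ciP_of_mSep) hconv hup hdown
    i j).trans (hH.1 i j).symm
end

section
/- If a probability distribution P over variables (X_v)_{v∈V} is faithful to some directed ancestral graph, then P is V-stable. -/
open MeasureTheory ProbabilityTheory

/-!
m-separation is singleton-transitive in every mixed graph. Given connecting paths `p` from `i` to
`k` and `q` from `k` to `j`, leave `p` at its first node `v` on `q` and follow `q` from there; this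
is a path, and `v` is the only node at which it can fail to be connecting. If `v` is a
non-collider, the path is connecting given `C`. If `v` is a collider, follow `p` from `v` towards
`k`: one meets a collider of `p` or runs along arrows up to `k`, so `v` is in `C ∪ {k}` or is an
ancestor of a node in it, and the path is connecting given `C ∪ {k}`.
-/

theorem infix_triple_append_cons {α : Type*} {a b c v : α} {l₁ l₂ : List α}
    (h : [a, b, c] <:+: l₁ ++ v :: l₂) :
    [a, b, c] <:+: l₁ ++ [v] ∨ [a, b, c] <:+: v :: l₂ ∨
      (l₁.getLast? = some a ∧ b = v ∧ l₂.head? = some c) := by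
  induction l₁ with
  | nil => exact Or.inr (Or.inl h)
  | cons x l ih =>
    rcases List.infix_cons_iff.1 h with hpre | hinf
    · obtain ⟨rfl, hbc⟩ := List.cons_prefix_cons.1 hpre
      rcases l with _ | ⟨y, _ | ⟨z, l⟩⟩
      · obtain ⟨rfl, hc⟩ := List.cons_prefix_cons.1 hbc
        exact Or.inr (Or.inr ⟨rfl, rfl, List.singleton_prefix_iff_head?_eq_some.1 hc⟩)
      · obtain ⟨rfl, rfl⟩ : b = y ∧ c = v := by simpa [List.cons_prefix_cons] using hbc
        exact Or.inl (List.infix_refl _)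
      · obtain ⟨rfl, rfl⟩ : b = y ∧ c = z := by simpa [List.cons_prefix_cons] using hbc
        exact Or.inl (List.prefix_append [a, b, c] (l ++ [v])).isInfix
    · rcases ih hinf with hl | hr | ⟨ha, hb, hc⟩
      · exact Or.inl (List.infix_cons hl)
      · exact Or.inr (Or.inl hr)
      · exact Or.inr (Or.inr ⟨by simp [List.getLast?_cons, ha], hb, hc⟩)

theorem exists_eq_append_cons_of_mem_of_mem {α : Type*} {k : α} {p q : List α} (hp : k ∈ p)
    (hq : k ∈ q) : ∃ l₁ v l₂, p = l₁ ++ v :: l₂ ∧ v ∈ q ∧ l₁.Disjoint q := by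
  classical
  have hfind : (p.find? (· ∈ q)).isSome := List.find?_isSome.2 ⟨k, hp, decide_eq_true hq⟩
  obtain ⟨v, hv⟩ := Option.isSome_iff_exists.1 hfind
  obtain ⟨hvq, l₁, l₂, rfl, hl₁⟩ := List.find?_eq_some_iff_append.1 hv
  exact ⟨l₁, v, l₂, rfl, by simpa using hvq, fun x hx => by simpa using hl₁ x hx⟩

namespace MixedGraph

variable {V : Type} {G : MixedGraph V} {C : Set V} {i j k v z : V} {p q l l₁ l₂ m₁ m₂ : List V}

/-- The condition that a path connecting given `C` has to satisfy at each tripath `⟨a, b, c⟩` on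
it. -/
def OpenAt (G : MixedGraph V) (C : Set V) (a b c : V) : Prop :=
  (G.collider a b c → b ∈ C ∨ ∃ d ∈ C, G.anc b d) ∧ (¬ G.collider a b c → b ∉ C)

theorem OpenAt.union_singleton {a b c : V} (h : G.OpenAt C a b c) (hb : b ≠ k) :
    G.OpenAt (C ∪ {k}) a b c :=
  ⟨fun hcol => (h.1 hcol).imp Or.inl fun ⟨d, hd, hbd⟩ => ⟨d, Or.inl hd, hbd⟩,
    fun hcol => not_or.2 ⟨h.2 hcol, hb⟩⟩

theorem connecting_iff_infix : G.Connecting C p ↔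
    p.Nodup ∧ p.IsChain G.adj ∧ ∀ a b c, [a, b, c] <:+: p → G.OpenAt C a b c := by
  refine and_congr_right fun _ => and_congr_right fun _ => ⟨?_, ?_⟩
  · rintro h a b c ⟨s, t, rfl⟩
    have hopen := h (s.length + 1) (by simp) (by simp) (by simp) (by simp; omega)
    simpa [OpenAt, Nat.add_assoc] using hopen
  · intro h t ht _ _ _
    obtain ⟨s, rfl⟩ := Nat.exists_eq_add_of_le' ht
    refine h _ _ _ ⟨p.take s, p.drop (s + 3), ?_⟩
    simp

namespace Connecting

theorem openAt {a b c : V} (h : G.Connecting C p) (habc : [a, b, c] <:+: p) : G.OpenAt C a b c :=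
  (connecting_iff_infix.1 h).2.2 a b c habc

theorem of_infix (h : G.Connecting C p) (hqp : q <:+: p) : G.Connecting C q := by
  rw [connecting_iff_infix] at h ⊢
  exact ⟨h.1.sublist hqp.sublist, h.2.1.infix hqp, fun a b c habc => h.2.2 a b c (habc.trans hqp)⟩

theorem append_of_openAt {x y : V} (h₁ : G.Connecting C (l₁ ++ [x, v]))
    (h₂ : G.Connecting C (v :: y :: l₂)) (hdisj : (l₁ ++ [x]).Disjoint (v :: y :: l₂))
    (hv : G.OpenAt C x v y) : G.Connecting C (l₁ ++ x :: v :: y :: l₂) := by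
  rw [List.append_cons l₁ x [v]] at h₁
  rw [List.append_cons l₁ x]
  rw [connecting_iff_infix] at h₁ h₂ ⊢
  refine ⟨h₁.1.of_append_left.append h₂.1 hdisj, List.isChain_split.2 ⟨h₁.2.1, h₂.2.1⟩, ?_⟩
  intro a b c habc
  rcases infix_triple_append_cons habc with hl | hr | ⟨ha, rfl, hc⟩
  · exact h₁.2.2 a b c hl
  · exact h₂.2.2 a b c hr
  · obtain rfl : x = a := by simpa using ha
    obtain rfl : y = c := by simpa using hc
    exact hv

theorem union_singleton (h : G.Connecting C p) (hk : ∀ a b c, [a, b, c] <:+: p → b ≠ k) :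
    G.Connecting (C ∪ {k}) p := by
  rw [connecting_iff_infix] at h ⊢
  exact ⟨h.1, h.2.1, fun a b c habc => (h.2.2 a b c habc).union_singleton (hk a b c habc)⟩

theorem union_singleton_of_head? (h : G.Connecting C p) (hk : p.head? = some k) :
    G.Connecting (C ∪ {k}) p := by
  obtain ⟨l, rfl⟩ := List.head?_eq_some_iff.1 hk
  refine h.union_singleton ?_
  rintro a b c habc rfl
  rcases List.infix_cons_iff.1 habc with hpre | hinf
  · obtain rfl := (List.cons_prefix_cons.1 hpre).1
    simpa using h.1.sublist habc.sublist
  · exact (List.nodup_cons.1 h.1).1 (hinf.subset (by simp))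

theorem union_singleton_of_getLast? (h : G.Connecting C p) (hk : p.getLast? = some k) :
    G.Connecting (C ∪ {k}) p := by
  obtain ⟨l, rfl⟩ := List.getLast?_eq_some_iff.1 hk
  refine h.union_singleton ?_
  rintro a b c habc rfl
  rcases List.infix_concat_iff.1 habc with ⟨s, hs⟩ | hinf
  · obtain rfl : c = b := by simpa using congrArg List.getLast? hs
    simpa using h.1.sublist habc.sublist
  · exact List.disjoint_of_nodup_append h.1 (hinf.subset (a := b) (by simp)) (by simp)

end Connecting

theorem IsDirectedAncestral.symm_arc (hG : G.IsDirectedAncestral) : Std.Symm G.arc :=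
  ⟨fun i j => (hG.1 i j).1⟩

theorem arrow_of_adj_of_not_headInto [Std.Symm G.arc] (hadj : G.adj v z)
    (hzv : ¬ G.headInto z v) : G.arrow v z :=
  hadj.resolve_right fun h => hzv (h.imp_right (Std.Symm.symm v z))

namespace Connecting

theorem exists_anc_of_arrow [Std.Symm G.arc] (h : G.Connecting C (v :: z :: l))
    (hlast : ∀ k ∈ (z :: l).getLast?, k ∈ C) (hvz : G.arrow v z) : ∃ c ∈ C, G.anc v c := by
  induction l generalizing v z with
  | nil => exact ⟨z, hlast z rfl, .single hvz⟩
  | cons y l ih =>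
    by_cases hyz : G.headInto y z
    · have hzC := (h.openAt (List.prefix_append [v, z, y] l).isInfix).1 ⟨Or.inl hvz, hyz⟩
      rcases hzC with hz | ⟨c, hc, hzc⟩
      · exact ⟨z, hz, .single hvz⟩
      · exact ⟨c, hc, .head hvz hzc⟩
    · have hzyl : G.Connecting C (z :: y :: l) := h.of_infix (List.suffix_cons v _).isInfix
      have hzy := arrow_of_adj_of_not_headInto (List.isChain_cons_cons.1 hzyl.2.1).1 hyz
      obtain ⟨c, hc, hzc⟩ := ih hzyl (by simpa using hlast) hzy
      exact ⟨c, hc, .head hvz hzc⟩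

theorem mem_or_exists_anc_of_headInto {x : V} [Std.Symm G.arc]
    (h : G.Connecting C (l₁ ++ x :: v :: l₂)) (hlast : ∀ k ∈ (v :: l₂).getLast?, k ∈ C)
    (hxv : G.headInto x v) : v ∈ C ∨ ∃ c ∈ C, G.anc v c := by
  rcases l₂ with _ | ⟨z, l⟩
  · exact Or.inl (hlast v rfl)
  by_cases hzv : G.headInto z v
  · exact (h.openAt ⟨l₁, l, by simp⟩).1 ⟨hxv, hzv⟩
  · have hvzl : G.Connecting C (v :: z :: l) := h.of_infix ⟨l₁ ++ [x], [], by simp⟩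
    have hvz := arrow_of_adj_of_not_headInto (List.isChain_cons_cons.1 hvzl.2.1).1 hzv
    exact Or.inr (hvzl.exists_anc_of_arrow (by simpa using hlast) hvz)

theorem notMem_of_not_headInto_left {x : V} (h : G.Connecting C (l₁ ++ x :: v :: l₂))
    (hlast : ∀ k ∈ (v :: l₂).getLast?, k ∉ C) (hxv : ¬ G.headInto x v) : v ∉ C := by
  rcases l₂ with _ | ⟨z, l⟩
  · exact hlast v rfl
  · exact (h.openAt (c := z) ⟨l₁, l, by simp⟩).2 fun hcol => hxv hcol.1

theorem notMem_of_not_headInto_right {y : V} (h : G.Connecting C (l₁ ++ v :: y :: l₂))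
    (hhead : ∀ k ∈ (l₁ ++ [v]).head?, k ∉ C) (hyv : ¬ G.headInto y v) : v ∉ C := by
  rcases l₁.eq_nil_or_concat with rfl | ⟨l, z, rfl⟩
  · exact hhead v rfl
  · exact (h.openAt (a := z) ⟨l, l₂, by simp⟩).2 fun hcol => hyv hcol.2

theorem splice_of_collider [Std.Symm G.arc] {x y : V} (hp : G.Connecting C (l₁ ++ x :: v :: l₂))
    (hlast : ∀ k ∈ (v :: l₂).getLast?, k ∈ C) (hq : G.Connecting C (m₁ ++ v :: y :: m₂))
    (hdisj : (l₁ ++ [x]).Disjoint (v :: y :: m₂)) (hcol : G.collider x v y) :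
    G.Connecting C (l₁ ++ x :: v :: y :: m₂) :=
  (hp.of_infix ⟨[], l₂, by simp⟩).append_of_openAt (hq.of_infix ⟨m₁, [], by simp⟩) hdisj
    ⟨fun _ => hp.mem_or_exists_anc_of_headInto hlast hcol.1, (absurd hcol ·)⟩

theorem splice_of_not_collider {x y : V} (hp : G.Connecting C (l₁ ++ x :: v :: l₂))
    (hlast : ∀ k ∈ (v :: l₂).getLast?, k ∉ C) (hq : G.Connecting C (m₁ ++ v :: y :: m₂))
    (hhead : ∀ k ∈ (m₁ ++ [v]).head?, k ∉ C)
    (hdisj : (l₁ ++ [x]).Disjoint (v :: y :: m₂)) (hcol : ¬ G.collider x v y) :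
    G.Connecting C (l₁ ++ x :: v :: y :: m₂) := by
  have hv : v ∉ C := (not_and_or.1 hcol).elim
    (hp.notMem_of_not_headInto_left hlast) (hq.notMem_of_not_headInto_right hhead)
  exact (hp.of_infix ⟨[], l₂, by simp⟩).append_of_openAt (hq.of_infix ⟨m₁, [], by simp⟩) hdisj
    ⟨(absurd · hcol), fun _ => hv⟩

theorem exists_splice [Std.Symm G.arc] (hk : k ∉ C)
    (hp : G.Connecting C p) (hpi : p.head? = some i) (hpk : p.getLast? = some k)
    (hq : G.Connecting C q) (hqk : q.head? = some k) (hqj : q.getLast? = some j) :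
    ∃ r : List V, (G.Connecting C r ∨ G.Connecting (C ∪ {k}) r) ∧
      r.head? = some i ∧ r.getLast? = some j := by
  have hp' := hp.union_singleton_of_getLast? hpk
  have hq' := hq.union_singleton_of_head? hqk
  obtain ⟨l₁, v, l₂, rfl, hvq, hdisj⟩ := exists_eq_append_cons_of_mem_of_mem
    (List.mem_of_getLast? hpk) (List.mem_of_head? hqk)
  obtain ⟨m₁, m₂, rfl⟩ := List.append_of_mem hvq
  refine ⟨l₁ ++ v :: m₂, ?_, by simpa using hpi, by simpa using hqj⟩
  rcases l₁.eq_nil_or_concat' with rfl | ⟨l₁, x, rfl⟩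
  · exact Or.inl (hq.of_infix (List.suffix_append m₁ _).isInfix)
  rcases m₂ with _ | ⟨y, m₂⟩
  · exact Or.inl (hp.of_infix ⟨[], l₂, by simp⟩)
  have hlast : (v :: l₂).getLast? = some k := by simpa using hpk
  have hhead : (m₁ ++ [v]).head? = some k := by simpa using hqk
  have hdisj' : (l₁ ++ [x]).Disjoint (v :: y :: m₂) :=
    List.disjoint_of_disjoint_append_right_right hdisj
  simp only [List.append_assoc, List.singleton_append] at hp hp' ⊢
  by_cases hcol : G.collider x v y
  · exact Or.inr (hp'.splice_of_collider (by simp [hlast]) hq' hdisj' hcol)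
  · exact Or.inl (hp.splice_of_not_collider (by simpa [hlast]) hq (by simpa [hhead]) hdisj' hcol)

end Connecting

theorem mSep_singleton_iff :
    G.mSep {i} {j} C ↔ ¬ ∃ p, G.Connecting C p ∧ p.head? = some i ∧ p.getLast? = some j := by
  simp [mSep]

theorem mSep_or_mSep_of_mSep_union_singleton [Std.Symm G.arc] (hk : k ∉ C)
    (hC : G.mSep {i} {j} C) (hCk : G.mSep {i} {j} (C ∪ {k})) :
    G.mSep {i} {k} C ∨ G.mSep {k} {j} C := by
  rw [mSep_singleton_iff] at hC hCk
  by_contra! h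
  simp only [mSep_singleton_iff, not_not] at h
  obtain ⟨⟨p, hp, hpi, hpk⟩, q, hq, hqk, hqj⟩ := h
  obtain ⟨r, hr | hr, hri, hrj⟩ := hp.exists_splice hk hpi hpk hq hqk hqj
  · exact hC ⟨r, hr, hri, hrj⟩
  · exact hCk ⟨r, hr, hri, hrj⟩

end MixedGraph

section Probabilistic

variable {V Ω : Type} [MeasurableSpace Ω] [StandardBorelSpace Ω] [Nonempty Ω]
  {𝓧 : V → Type} [∀ v, MeasurableSpace (𝓧 v)] {μ : Measure Ω} [IsFiniteMeasure μ]
  {X : ∀ v, Ω → 𝓧 v} {hX : ∀ v, Measurable (X v)}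

theorem ciP_symm {i j : V} {C : Set V} (h : ciP μ X hX i j C) : ciP μ X hX j i C :=
  CondIndepFun.symm h

theorem Faithful.ciP_iff_mSep {G : MixedGraph V} (hF : Faithful μ X hX G) {i j : V} {C : Set V}
    (hij : i ≠ j) (hi : i ∉ C) (hj : j ∉ C) : ciP μ X hX i j C ↔ G.mSep {i} {j} C :=
  (hF {i} {j} C (by simpa using hij) (by simpa using hi) (by simpa using hj)).symm

theorem Faithful.singletonTransitive {G : MixedGraph V} [Std.Symm G.arc]
    (hF : Faithful μ X hX G) : SingletonTransitive (ciP μ X hX) := by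
  intro i j k C hij hik hjk hi hj hk hC hCk
  have hsep := (hF.ciP_iff_mSep hij hi hj).1 hC
  have hsepk := (hF.ciP_iff_mSep hij (by simp [hi, hik]) (by simp [hj, hjk])).1 hCk
  refine (MixedGraph.mSep_or_mSep_of_mSep_union_singleton hk hsep hsepk).imp ?_ ?_
  · exact (hF.ciP_iff_mSep hik hi hk).2
  · exact fun h => ciP_symm ((hF.ciP_iff_mSep hjk.symm hk hj).2 h)

end Probabilistic

theorem SingletonTransitive.vStable {V : Type} {ci : V → V → Set V → Prop}
    (hci : SingletonTransitive ci) (hsymm : ∀ i j C, ci i j C → ci j i C) : VStable ci := by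
  rintro ⟨i, k, j, C, hij, hik, hjk, hsk, hsk', -, hi, hj, hk, hC, hCk⟩
  rcases hci i j k C hij hik hjk hi hj hk hC hCk with h | h
  · exact hsk.2 ⟨C, hi, hk, h⟩
  · exact hsk'.2 ⟨C, hk, hj, hsymm j k C h⟩

theorem statement_8_general {V Ω : Type} [MeasurableSpace Ω] [StandardBorelSpace Ω] [Nonempty Ω]
    (μ : Measure Ω) [IsFiniteMeasure μ] {𝓧 : V → Type} [∀ v, MeasurableSpace (𝓧 v)]
    (X : ∀ v, Ω → 𝓧 v) (hX : ∀ v, Measurable (X v))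
    (hfaith : ∃ G : MixedGraph V, Std.Symm G.arc ∧ Faithful μ X hX G) :
    VStable (ciP μ X hX) := by
  obtain ⟨G, hG, hF⟩ := hfaith
  exact hF.singletonTransitive.vStable fun _ _ _ => ciP_symm

/-- Corollary 16 of Sadeghi–Soo. -/
theorem statement_8 {V : Type} [Fintype V]
    {Ω : Type} [MeasurableSpace Ω] [StandardBorelSpace Ω] [Nonempty Ω]
    (μ : Measure Ω) [IsProbabilityMeasure μ]
    {𝓧 : V → Type} [∀ v, MeasurableSpace (𝓧 v)]
    (X : ∀ v, Ω → 𝓧 v) (hX : ∀ v, Measurable (X v))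
    (hfaith : ∃ G : MixedGraph V, G.IsDirectedAncestral ∧ Faithful μ X hX G) :
    VStable (ciP μ X hX) := by
  exact statement_8_general μ X hX (hfaith.imp fun _ h => ⟨h.1.symm_arc, h.2⟩)
end
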